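/- (Corollary 6) Let λ = 1/2, n ≥ 1, m ∈ {1,…,n}, and set L^{(m)} = −(1/16)·(ξ_m∘D − 2E'∘(∂/∂u_m))∘D, an element of the Weyl algebra W (here ξ_m denotes the multiplication operator by ξ_m, and E' = E + n/2 ∈ W). Then for all ψ ∈ A: C^{1/2}_2(ξ_m, ψ) = C^{1/2}_2(ψ, ξ_m) = (E'(E'+1))^{−1}(L^{(m)}ψ); equivalently, E'(E'+1)(C^{1/2}_2(ξ_m,ψ)) = L^{(m)}ψ. -/

import Mathlib

open MvPolynomial

/-- The polynomial symbol algebra `A = ℂ[u₁,…,uₙ,ξ₁,…,ξₙ]`: variables `Sum.inl i` are the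
`uᵢ` and variables `Sum.inr i` are the `ξᵢ`. -/
abbrev PolA (n : ℕ) := MvPolynomial (Fin n ⊕ Fin n) ℂ

namespace LO

/-- ξ-degree of a monomial exponent. -/
def xiDeg {n : ℕ} (d : (Fin n ⊕ Fin n) →₀ ℕ) : ℕ :=
  ∑ i : Fin n, d (Sum.inr i)

/-- `c(E)`: the operator multiplying the ξ-degree-`m` component by `c m`. -/
noncomputable def cE {n : ℕ} (c : ℕ → ℂ) (φ : PolA n) : PolA n :=
  ∑ d ∈ φ.support, monomial d (c (xiDeg d) * coeff d φ)

/-- `D = Σᵢ ∂²/∂uᵢ∂ξᵢ`. -/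
noncomputable def Dop {n : ℕ} (φ : PolA n) : PolA n :=
  ∑ i : Fin n, pderiv (Sum.inl i) (pderiv (Sum.inr i) φ)

/-- The scalar `h^λ_d(m)`. -/
noncomputable def hScal (n : ℕ) (lam : ℂ) (d m : ℕ) : ℂ :=
  (d.factorial : ℂ)⁻¹ *
    ∏ j ∈ Finset.range d,
      ((m : ℂ) + (j : ℂ) + lam * ((n : ℂ) + 1)) /
        (2 * (m : ℂ) + (j : ℂ) + (n : ℂ) + (d : ℂ))

/-- The scalar `g^λ_d(m)`. -/
noncomputable def gScal (n : ℕ) (lam : ℂ) (d m : ℕ) : ℂ :=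
  (d.factorial : ℂ)⁻¹ *
    ∏ j ∈ Finset.range d,
      (-(m : ℂ) - (j : ℂ) - lam * ((n : ℂ) + 1)) /
        (2 * (m : ℂ) + (j : ℂ) + (n : ℂ) + 1)

/-- `bh^λ_d = h^λ_d(E) ∘ D^d` (equal to the identity for `d = 0`). -/
noncomputable def bh {n : ℕ} (lam : ℂ) (d : ℕ) (φ : PolA n) : PolA n :=
  cE (hScal n lam d) (Dop^[d] φ)

/-- `bg^λ_d = g^λ_d(E) ∘ D^d` (equal to the identity for `d = 0`). -/
noncomputable def bg {n : ℕ} (lam : ℂ) (d : ℕ) (φ : PolA n) : PolA n :=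
  cE (gScal n lam d) (Dop^[d] φ)

/-- `N_k(φ,ψ) = (1/k!) Σ_{α ∈ {1,…,n}^k} ∂^kφ/∂ξ_α · ∂^kψ/∂u_α`. -/
noncomputable def Nop {n : ℕ} (k : ℕ) (φ ψ : PolA n) : PolA n :=
  (k.factorial : ℂ)⁻¹ •
    ∑ α : Fin k → Fin n,
      ((List.ofFn α).foldr (fun i acc => pderiv (Sum.inr i) acc) φ) *
      ((List.ofFn α).foldr (fun i acc => pderiv (Sum.inl i) acc) ψ)

/-- The coefficient `C^λ_p` of the Lecomte–Ovsienko star product. -/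
noncomputable def C (n : ℕ) (lam : ℂ) (p : ℕ) (φ ψ : PolA n) : PolA n :=
  ∑ i ∈ Finset.range (p + 1), ∑ j ∈ Finset.range (p + 1),
    ∑ k ∈ Finset.range (p + 1), ∑ m ∈ Finset.range (p + 1),
      if i + j + k + m = p then bg lam m (Nop k (bh lam i φ) (bh lam j ψ)) else 0

/-- The Poisson bracket `{φ,ψ}`. -/
noncomputable def pb {n : ℕ} (φ ψ : PolA n) : PolA n :=
  ∑ i : Fin n,
    (pderiv (Sum.inr i) φ * pderiv (Sum.inl i) ψ
      - pderiv (Sum.inl i) φ * pderiv (Sum.inr i) ψ)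

/-- `φ ∈ A^m` (ξ-homogeneous of degree `m`; for `m < 0` this forces `φ = 0`). -/
def IsXiHomog {n : ℕ} (m : ℤ) (φ : PolA n) : Prop :=
  ∀ d ∈ φ.support, (xiDeg d : ℤ) = m

/-- The set of spanning momentum functions of the projective `sl_{n+1}(ℝ)`-action. -/
noncomputable def momSet (n : ℕ) : Set (PolA n) :=
  (Set.range fun i : Fin n => (X (Sum.inr i) : PolA n)) ∪
  (Set.range fun ij : Fin n × Fin n =>
    (X (Sum.inl ij.1) * X (Sum.inr ij.2) : PolA n)) ∪
  (Set.range fun i : Fin n =>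
    (X (Sum.inl i) * ∑ k : Fin n, X (Sum.inl k) * X (Sum.inr k) : PolA n))

/-- The span `M` of the momentum functions. -/
noncomputable def momSpan (n : ℕ) : Submodule ℂ (PolA n) := Submodule.span ℂ (momSet n)

/-- The Weyl algebra `W` of differential operators with polynomial coefficients,
as a subalgebra of `End_ℂ(A)`. -/
noncomputable def Weyl (n : ℕ) : Subalgebra ℂ (Module.End ℂ (PolA n)) :=
  Algebra.adjoin ℂ
    ((Set.range fun i : Fin n =>
        (LinearMap.mulLeft ℂ (X (Sum.inl i)) : Module.End ℂ (PolA n))) ∪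
     (Set.range fun i : Fin n =>
        (LinearMap.mulLeft ℂ (X (Sum.inr i)) : Module.End ℂ (PolA n))) ∪
     (Set.range fun v : Fin n ⊕ Fin n =>
        ((pderiv v).toLinearMap : Module.End ℂ (PolA n))))

/-- A bilinear map `B : A × A → A` is bidifferential if it is a finite sum
`B(φ,ψ) = Σ_α A_α(φ)·B_α(ψ)` with `A_α, B_α` in the Weyl algebra. -/
def Bidiff (n : ℕ) (B : PolA n → PolA n → PolA n) : Prop :=
  ∃ (N : ℕ) (Aop Bop : Fin N → Weyl n),
    ∀ φ ψ : PolA n,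
      B φ ψ = ∑ α : Fin N,
        (Aop α : Module.End ℂ (PolA n)) φ * (Bop α : Module.End ℂ (PolA n)) ψ

/-- The scalar by which `T_p = ∏_{i=1}^{⌊p/2⌋}(E'+i)` acts on `A^m`. -/
noncomputable def TScal (n p m : ℕ) : ℂ :=
  ∏ i ∈ Finset.Icc 1 (p / 2), ((m : ℂ) + (n : ℂ) / 2 + (i : ℂ))

/-- The scalar by which `S_p = ∏_{i=1}^{⌊p/2⌋}(E'−i)` acts on `A^m`. -/
noncomputable def SScal (n p m : ℕ) : ℂ :=
  ∏ i ∈ Finset.Icc 1 (p / 2), ((m : ℂ) + (n : ℂ) / 2 - (i : ℂ))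

/-- The operator `T_p`. -/
noncomputable def Tp (n p : ℕ) : PolA n → PolA n := cE (TScal n p)

/-- The operator `S_p`. -/
noncomputable def Sp (n p : ℕ) : PolA n → PolA n := cE (SScal n p)

/-- The fiberwise Euler operator `E = Σ ξᵢ ∂/∂ξᵢ` as an endomorphism. -/
noncomputable def Elin (n : ℕ) : Module.End ℂ (PolA n) :=
  ∑ i : Fin n,
    (LinearMap.mulLeft ℂ (X (Sum.inr i)) : Module.End ℂ (PolA n)) ∘ₗ
      (pderiv (Sum.inr i)).toLinearMap

/-- `E' = E + n/2` as an endomorphism. -/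
noncomputable def E'lin (n : ℕ) : Module.End ℂ (PolA n) :=
  Elin n + ((n : ℂ) / 2) • 1

/-- `D` as an endomorphism. -/
noncomputable def Dlin (n : ℕ) : Module.End ℂ (PolA n) :=
  ∑ i : Fin n,
    ((pderiv (Sum.inl i)).toLinearMap : Module.End ℂ (PolA n)) ∘ₗ
      (pderiv (Sum.inr i)).toLinearMap

/-- `L^{(m)} = −(1/16)(ξ_m∘D − 2E'∘∂/∂u_m)∘D`. -/
noncomputable def Lop (n : ℕ) (m : Fin n) : Module.End ℂ (PolA n) :=
  (-(1 / 16 : ℂ)) •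
    (((LinearMap.mulLeft ℂ (X (Sum.inr m)) : Module.End ℂ (PolA n)) ∘ₗ Dlin n
        - (2 : ℂ) • (E'lin n ∘ₗ (pderiv (Sum.inl m)).toLinearMap)) ∘ₗ Dlin n)

end LO

/-!
Since `ξ_m` is affine in `ξ`, independent of `u` and killed by `D`, only the terms
`bg_2(ξ_m ψ) + bg_1(ξ_m bh_1 ψ) + ξ_m bh_2 ψ` of `C^λ_2(ψ, ξ_m)` survive. Exchanging the arguments
adds `∂_{u_m} bh_1 ψ + bg_1(∂_{u_m} ψ)`, which vanishes because `g_1 = -h_1` and `∂_{u_m}` commutes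
with `D` and with functions of `E`. Moving `D` to the right by `[D, ξ_m] = ∂_{u_m}` and
`D c(E) = c(E+1) D` leaves `a(E) ξ_m D² ψ + b(E) ∂_{u_m} D ψ`. With `x = E + λ(n+1)` and
`N = 2E + n = 2E'` the scalars are `b = x(N+1-x) / ((N+1)²(N+2))` and `a = -b/N`, so that this is a
function of `E` applied to `L^{(m)} ψ`, for every `λ`; at `λ = 1/2` one has `2x = N+1` and the
function is `4/(N(N+2)) = (E'(E'+1))⁻¹`.
-/

namespace LO

variable {n : ℕ}

/-! ### Functions of the Euler operator -/

lemma coeff_cE (c : ℕ → ℂ) (φ : PolA n) (d : (Fin n ⊕ Fin n) →₀ ℕ) :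
    coeff d (cE c φ) = c (xiDeg d) * coeff d φ := by
  classical
  simp only [cE, coeff_sum, coeff_monomial, Finset.sum_ite_eq']
  split_ifs with hd
  · rfl
  · rw [notMem_support_iff.mp hd, mul_zero]

lemma cE_monomial (c : ℕ → ℂ) (d : (Fin n ⊕ Fin n) →₀ ℕ) (a : ℂ) :
    cE c (monomial d a : PolA n) = monomial d (c (xiDeg d) * a) := by
  classical
  ext e
  rw [coeff_cE, coeff_monomial, coeff_monomial]
  split_ifs with hde
  · rw [hde]
  · rw [mul_zero]

lemma cE_zero (c : ℕ → ℂ) : cE c (0 : PolA n) = 0 := by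
  simp [cE]

lemma cE_one (φ : PolA n) : cE (fun _ => 1) φ = φ := by
  ext d; simp [coeff_cE]

lemma cE_add (c : ℕ → ℂ) (φ ψ : PolA n) : cE c (φ + ψ) = cE c φ + cE c ψ := by
  ext d; simp [coeff_cE, mul_add]

lemma cE_fun_add (c c' : ℕ → ℂ) (φ : PolA n) :
    cE (fun k => c k + c' k) φ = cE c φ + cE c' φ := by
  ext d; simp [coeff_cE, add_mul]

lemma cE_cE (c c' : ℕ → ℂ) (φ : PolA n) : cE c (cE c' φ) = cE (fun k => c k * c' k) φ := by
  ext d; simp [coeff_cE, mul_assoc]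

lemma xiDeg_add (d e : (Fin n ⊕ Fin n) →₀ ℕ) : xiDeg (d + e) = xiDeg d + xiDeg e := by
  simp [xiDeg, Finset.sum_add_distrib]

lemma xiDeg_single_inl (i : Fin n) (a : ℕ) : xiDeg (Finsupp.single (Sum.inl i) a) = 0 := by
  simp [xiDeg]

lemma xiDeg_single_inr (i : Fin n) (a : ℕ) : xiDeg (Finsupp.single (Sum.inr i) a) = a := by
  classical
  simp [xiDeg, Finsupp.single_apply]

lemma cE_X_inr_mul (c : ℕ → ℂ) (i : Fin n) (φ : PolA n) :
    cE c (X (Sum.inr i) * φ) = X (Sum.inr i) * cE (fun k => c (k + 1)) φ := by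
  induction φ using MvPolynomial.induction_on' with
  | monomial d a =>
    simp only [cE_monomial, X, monomial_mul, xiDeg_add, xiDeg_single_inr, one_mul, add_comm 1]
  | add p q hp hq => simp only [mul_add, cE_add, hp, hq]

lemma pderiv_inl_cE (c : ℕ → ℂ) (i : Fin n) (φ : PolA n) :
    pderiv (Sum.inl i) (cE c φ) = cE c (pderiv (Sum.inl i) φ) := by
  ext d
  simp only [coeff_pderiv, coeff_cE, xiDeg_add, xiDeg_single_inl, add_zero, mul_assoc]

lemma pderiv_inr_cE (c : ℕ → ℂ) (i : Fin n) (φ : PolA n) :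
    pderiv (Sum.inr i) (cE c φ) = cE (fun k => c (k + 1)) (pderiv (Sum.inr i) φ) := by
  ext d
  simp only [coeff_pderiv, coeff_cE, xiDeg_add, xiDeg_single_inr, mul_assoc]

lemma E'lin_apply (φ : PolA n) : E'lin n φ = cE (fun k => (k : ℂ) + (n : ℂ) / 2) φ := by
  induction φ using MvPolynomial.induction_on' with
  | monomial d a =>
    simp only [E'lin, Elin, LinearMap.add_apply, LinearMap.sum_apply, LinearMap.comp_apply,
      LinearMap.smul_apply, LinearMap.mulLeft_apply, Derivation.coeFn_coe, X_mul_pderiv_monomial,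
      Module.End.one_apply, smul_monomial, cE_monomial]
    rw [← map_sum, ← map_add]
    simp only [xiDeg, nsmul_eq_mul, smul_eq_mul, ← Finset.sum_mul, Nat.cast_sum, add_mul]
  | add p q hp hq => rw [cE_add, map_add, hp, hq]

/-! ### The divergence operator -/

lemma pderiv_pderiv_comm {R σ : Type*} [CommSemiring R] (i j : σ) (p : MvPolynomial σ R) :
    pderiv i (pderiv j p) = pderiv j (pderiv i p) := by
  classical
  ext d
  obtain rfl | hij := eq_or_ne i j
  · rfl
  · simp [coeff_pderiv, add_right_comm d, hij, hij.symm, mul_right_comm]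

lemma pderiv_pderiv_X {R σ : Type*} [CommSemiring R] (i j k : σ) :
    pderiv i (pderiv j (X k : MvPolynomial σ R)) = 0 := by
  classical
  obtain rfl | hkj := eq_or_ne k j
  · rw [pderiv_X_self, pderiv_one]
  · rw [pderiv_X_of_ne hkj, map_zero]

lemma Dlin_apply (φ : PolA n) : Dlin n φ = Dop φ := by
  simp [Dlin, Dop]

lemma Dop_zero : Dop (0 : PolA n) = 0 := by
  simp [Dop]

lemma Dop_add (φ ψ : PolA n) : Dop (φ + ψ) = Dop φ + Dop ψ := by
  simp only [← Dlin_apply, map_add]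

lemma Dop_cE (c : ℕ → ℂ) (φ : PolA n) : Dop (cE c φ) = cE (fun k => c (k + 1)) (Dop φ) := by
  ext d
  simp only [Dop, pderiv_inr_cE, pderiv_inl_cE, coeff_sum, coeff_cE, Finset.mul_sum]

lemma Dop_pderiv_inl (i : Fin n) (φ : PolA n) :
    Dop (pderiv (Sum.inl i) φ) = pderiv (Sum.inl i) (Dop φ) := by
  simp only [Dop, map_sum]
  refine Finset.sum_congr rfl fun j _ => ?_
  rw [pderiv_pderiv_comm (Sum.inr j), pderiv_pderiv_comm (Sum.inl j)]

lemma Dop_X (v : Fin n ⊕ Fin n) : Dop (X v : PolA n) = 0 := by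
  simp only [Dop, pderiv_pderiv_X, Finset.sum_const_zero]

lemma Dop_mul (φ ψ : PolA n) :
    Dop (φ * ψ) = Dop φ * ψ + φ * Dop ψ +
      ∑ i, (pderiv (Sum.inl i) φ * pderiv (Sum.inr i) ψ +
        pderiv (Sum.inr i) φ * pderiv (Sum.inl i) ψ) := by
  simp only [Dop, Finset.sum_mul, Finset.mul_sum, ← Finset.sum_add_distrib, pderiv_mul, map_add]
  exact Finset.sum_congr rfl fun i _ => by ring

lemma sum_pderiv_inr_X_mul (m : Fin n) (φ : Fin n → PolA n) :
    ∑ i, pderiv (Sum.inr i) (X (Sum.inr m) : PolA n) * φ i = φ m := by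
  classical
  simp [pderiv_X, Pi.single_apply, Sum.inr.injEq]

lemma Dop_X_inr_mul (m : Fin n) (φ : PolA n) :
    Dop (X (Sum.inr m) * φ) = X (Sum.inr m) * Dop φ + pderiv (Sum.inl m) φ := by
  have pderiv_inl_X (i : Fin n) : pderiv (Sum.inl i) (X (Sum.inr m) : PolA n) = 0 :=
    pderiv_X_of_ne Sum.inr_ne_inl
  simp only [Dop_mul, Dop_X, pderiv_inl_X, zero_mul, zero_add, sum_pderiv_inr_X_mul]

/-! ### The bidifferential operators `N_k` -/

lemma Nop_zero (φ ψ : PolA n) : Nop 0 φ ψ = φ * ψ := by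
  simp [Nop]

lemma Nop_succ (k : ℕ) (φ ψ : PolA n) :
    Nop (k + 1) φ ψ = ((k : ℂ) + 1)⁻¹ •
      ∑ i, Nop k (pderiv (Sum.inr i) φ) (pderiv (Sum.inl i) ψ) := by
  simp only [Nop, ← Finset.smul_sum, smul_smul]
  rw [← (Fin.snocEquiv fun _ => Fin n).sum_comp, Fintype.sum_prod_type]
  simp [Fin.snocEquiv, List.ofFn_succ_last, Nat.factorial_succ, mul_comm, -List.ofFn_succ]

lemma Nop_zero_left (k : ℕ) (ψ : PolA n) : Nop k 0 ψ = 0 := by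
  induction k generalizing ψ with
  | zero => rw [Nop_zero, zero_mul]
  | succ k ih => simp only [Nop_succ, map_zero, ih, Finset.sum_const_zero, smul_zero]

lemma Nop_zero_right (k : ℕ) (φ : PolA n) : Nop k φ 0 = 0 := by
  induction k generalizing φ with
  | zero => rw [Nop_zero, mul_zero]
  | succ k ih => simp only [Nop_succ, map_zero, ih, Finset.sum_const_zero, smul_zero]

lemma Nop_one_X_inr_left (m : Fin n) (ψ : PolA n) :
    Nop 1 (X (Sum.inr m)) ψ = pderiv (Sum.inl m) ψ := by
  simp only [Nop_succ 0, Nop_zero, sum_pderiv_inr_X_mul, Nat.cast_zero, zero_add, inv_one,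
    one_smul]

lemma Nop_add_two_X_left (k : ℕ) (v : Fin n ⊕ Fin n) (ψ : PolA n) : Nop (k + 2) (X v) ψ = 0 := by
  simp only [Nop_succ, pderiv_pderiv_X, Nop_zero_left, Finset.sum_const_zero, smul_zero]

lemma Nop_succ_X_inr_right (k : ℕ) (φ : PolA n) (m : Fin n) :
    Nop (k + 1) φ (X (Sum.inr m)) = 0 := by
  simp only [Nop_succ, pderiv_X_of_ne Sum.inr_ne_inl, Nop_zero_right, Finset.sum_const_zero,
    smul_zero]

/-! ### The second star product coefficient on momenta -/

lemma hScal_zero (n : ℕ) (lam : ℂ) : hScal n lam 0 = fun _ => 1 := by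
  funext k; simp [hScal]

lemma gScal_zero (n : ℕ) (lam : ℂ) : gScal n lam 0 = fun _ => 1 := by
  funext k; simp [gScal]

lemma bh_zero (lam : ℂ) (φ : PolA n) : bh lam 0 φ = φ := by
  rw [bh, hScal_zero, cE_one, Function.iterate_zero_apply]

lemma bg_zero (lam : ℂ) (φ : PolA n) : bg lam 0 φ = φ := by
  rw [bg, gScal_zero, cE_one, Function.iterate_zero_apply]

lemma bh_succ_X (lam : ℂ) (d : ℕ) (v : Fin n ⊕ Fin n) : bh lam (d + 1) (X v : PolA n) = 0 := by
  rw [bh, Function.iterate_succ_apply, Dop_X, Function.iterate_fixed Dop_zero, cE_zero]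

lemma bg_map_zero (lam : ℂ) (d : ℕ) : bg lam d (0 : PolA n) = 0 := by
  rw [bg, Function.iterate_fixed Dop_zero, cE_zero]

lemma bh_one (lam : ℂ) (φ : PolA n) : bh lam 1 φ = cE (hScal n lam 1) (Dop φ) := rfl

lemma bg_one (lam : ℂ) (φ : PolA n) : bg lam 1 φ = cE (gScal n lam 1) (Dop φ) := rfl

lemma bh_two (lam : ℂ) (φ : PolA n) : bh lam 2 φ = cE (hScal n lam 2) (Dop (Dop φ)) := rfl

lemma bg_two (lam : ℂ) (φ : PolA n) : bg lam 2 φ = cE (gScal n lam 2) (Dop (Dop φ)) := rfl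

lemma C_two_eq (lam : ℂ) (φ ψ : PolA n) :
    C n lam 2 φ ψ =
      bg lam 2 (φ * ψ) + bg lam 1 (Nop 1 φ ψ) + Nop 2 φ ψ +
      (bg lam 1 (φ * bh lam 1 ψ) + Nop 1 φ (bh lam 1 ψ)) + φ * bh lam 2 ψ +
      (bg lam 1 (bh lam 1 φ * ψ) + Nop 1 (bh lam 1 φ) ψ + bh lam 1 φ * bh lam 1 ψ) +
      bh lam 2 φ * ψ := by
  simp [C, Finset.sum_range_succ, bh_zero, bg_zero, Nop_zero]

lemma C_two_X_inr_right (lam : ℂ) (m : Fin n) (ψ : PolA n) :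
    C n lam 2 ψ (X (Sum.inr m)) =
      bg lam 2 (X (Sum.inr m) * ψ) + bg lam 1 (X (Sum.inr m) * bh lam 1 ψ) +
        X (Sum.inr m) * bh lam 2 ψ := by
  simp only [C_two_eq, Nop_succ_X_inr_right, bh_succ_X lam 0, bh_succ_X lam 1, Nop_zero_right,
    bg_map_zero, mul_zero, add_zero]
  rw [mul_comm ψ, mul_comm (bh lam 1 ψ), mul_comm (bh lam 2 ψ)]

lemma C_two_X_inr_left (lam : ℂ) (m : Fin n) (ψ : PolA n) :
    C n lam 2 (X (Sum.inr m)) ψ =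
      C n lam 2 ψ (X (Sum.inr m)) +
        (pderiv (Sum.inl m) (bh lam 1 ψ) + bg lam 1 (pderiv (Sum.inl m) ψ)) := by
  rw [C_two_X_inr_right]
  simp only [C_two_eq, Nop_one_X_inr_left, Nop_add_two_X_left 0, bh_succ_X lam 0, bh_succ_X lam 1,
    Nop_zero_left, bg_map_zero, zero_mul, add_zero]
  ring

lemma hScal_one (n : ℕ) (lam : ℂ) (k : ℕ) :
    hScal n lam 1 k = (k + lam * (n + 1)) / (2 * k + n + 1) := by
  simp [hScal]

lemma gScal_one (n : ℕ) (lam : ℂ) (k : ℕ) :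
    gScal n lam 1 k = -((k + lam * (n + 1)) / (2 * k + n + 1)) := by
  simp [gScal, ← neg_div, add_comm, sub_eq_add_neg]

lemma hScal_two (n : ℕ) (lam : ℂ) (k : ℕ) :
    hScal n lam 2 k = (k + lam * (n + 1)) * (k + 1 + lam * (n + 1)) /
      (2 * (2 * k + n + 2) * (2 * k + n + 3)) := by
  simp only [hScal, Finset.prod_range_succ, Finset.prod_range_zero, Nat.factorial_two]
  push_cast
  rw [one_mul, add_zero, div_mul_div_comm, inv_mul_eq_div, div_div]
  congr 1
  ring

lemma gScal_two (n : ℕ) (lam : ℂ) (k : ℕ) :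
    gScal n lam 2 k = (k + lam * (n + 1)) * (k + 1 + lam * (n + 1)) /
      (2 * (2 * k + n + 1) * (2 * k + n + 2)) := by
  simp only [gScal, Finset.prod_range_succ, Finset.prod_range_zero, Nat.factorial_two]
  push_cast
  rw [one_mul, div_mul_div_comm, inv_mul_eq_div, div_div]
  congr 1 <;> ring

theorem C_two_X_inr_comm (lam : ℂ) (m : Fin n) (ψ : PolA n) :
    C n lam 2 (X (Sum.inr m)) ψ = C n lam 2 ψ (X (Sum.inr m)) := by
  rw [C_two_X_inr_left, add_eq_left, bh_one, bg_one, pderiv_inl_cE, Dop_pderiv_inl]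
  ext d
  simp [coeff_cE, hScal_one, gScal_one]

lemma C_two_X_inr_right_eq_cE (lam : ℂ) (m : Fin n) (ψ : PolA n) :
    C n lam 2 ψ (X (Sum.inr m)) =
      X (Sum.inr m) * cE (fun k => gScal n lam 2 (k + 1) +
          gScal n lam 1 (k + 1) * hScal n lam 1 (k + 1) + hScal n lam 2 k) (Dop (Dop ψ)) +
        cE (fun k => 2 * gScal n lam 2 k + gScal n lam 1 k * hScal n lam 1 k)
          (pderiv (Sum.inl m) (Dop ψ)) := by
  simp only [C_two_X_inr_right, bh_one, bg_one, bh_two, bg_two, Dop_X_inr_mul, Dop_add,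
    Dop_pderiv_inl, Dop_cE, pderiv_inl_cE, cE_add, cE_X_inr_mul, cE_cE, cE_fun_add, two_mul,
    mul_add]
  ring

/-! ### Factorization through `L^{(m)}` -/

lemma Lop_apply (m : Fin n) (ψ : PolA n) :
    Lop n m ψ = (-(1 / 16 : ℂ)) • (X (Sum.inr m) * Dop (Dop ψ) -
      (2 : ℂ) • cE (fun k => (k : ℂ) + (n : ℂ) / 2) (pderiv (Sum.inl m) (Dop ψ))) := by
  simp only [Lop, LinearMap.smul_apply, LinearMap.comp_apply, LinearMap.sub_apply, Dlin_apply,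
    E'lin_apply, LinearMap.mulLeft_apply, Derivation.coeFn_coe]

lemma cE_Lop (c : ℕ → ℂ) (m : Fin n) (ψ : PolA n) :
    cE c (Lop n m ψ) =
      X (Sum.inr m) * cE (fun k => -c (k + 1) / 16) (Dop (Dop ψ)) +
        cE (fun k => c k * (2 * k + n) / 16) (pderiv (Sum.inl m) (Dop ψ)) := by
  have hX := cE_X_inr_mul (fun k => -c k / 16) m (Dop (Dop ψ))
  rw [← hX, Lop_apply]
  ext d
  simp only [coeff_add, coeff_smul, coeff_sub, coeff_cE, smul_eq_mul]
  ring

/-- The scalar by which `C^λ_2(ξ_m, ·)` and `(E'(E'+1))⁻¹ L^{(m)}` differ on `A^k`. This form,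
rather than the factored one of `starWeight_eq`, shows that it is `1` at `λ = 1/2` and invariant
under `λ ↦ 1 - λ`. -/
noncomputable def starWeight (n : ℕ) (lam : ℂ) (k : ℕ) : ℂ :=
  1 - ((1 - 2 * lam) * (n + 1) / (2 * k + n + 1)) ^ 2

lemma starWeight_half (n : ℕ) : starWeight n (1 / 2) = fun _ => 1 := by
  funext k
  simp [starWeight]

lemma starWeight_eq (n : ℕ) (lam : ℂ) (k : ℕ) :
    starWeight n lam k =
      4 * (k + lam * (n + 1)) * (2 * k + n + 1 - (k + lam * (n + 1))) / (2 * k + n + 1) ^ 2 := by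
  have hN1 : (2 * k + n + 1 : ℂ) ≠ 0 := mod_cast (2 * k + n).succ_ne_zero
  rw [starWeight]
  field_simp
  ring

lemma E'_mul_E'_add_one_eq (n k : ℕ) :
    ((k : ℂ) + n / 2) * (k + n / 2 + 1) = (2 * k + n) * (2 * k + n + 2) / 4 := by
  ring

lemma E'_mul_E'_add_one_ne_zero (hn : n ≠ 0) (k : ℕ) : ((k : ℂ) + n / 2) * (k + n / 2 + 1) ≠ 0 := by
  have hN : (2 * k + n : ℂ) ≠ 0 := mod_cast (by omega : 2 * k + n ≠ 0)
  have hN2 : (2 * k + n + 2 : ℂ) ≠ 0 := mod_cast (2 * k + n + 1).succ_ne_zero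
  rw [E'_mul_E'_add_one_eq]
  exact div_ne_zero (mul_ne_zero hN hN2) (by norm_num)

lemma gScal_add_gScal_mul_hScal_add_hScal (n : ℕ) (lam : ℂ) (k : ℕ) :
    gScal n lam 2 (k + 1) + gScal n lam 1 (k + 1) * hScal n lam 1 (k + 1) + hScal n lam 2 k =
      -((((k + 1 : ℕ) : ℂ) + n / 2) * ((k + 1 : ℕ) + n / 2 + 1))⁻¹ *
        starWeight n lam (k + 1) / 16 := by
  have hN : (2 * (k + 1) + n : ℂ) ≠ 0 := mod_cast (by omega : 2 * (k + 1) + n ≠ 0)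
  have hN1 : (2 * (k + 1) + n + 1 : ℂ) ≠ 0 := mod_cast (2 * (k + 1) + n).succ_ne_zero
  have hN2 : (2 * (k + 1) + n + 2 : ℂ) ≠ 0 := mod_cast (2 * (k + 1) + n + 1).succ_ne_zero
  have eN : (2 * k + n + 2 : ℂ) = 2 * (k + 1) + n := by ring
  have eN1 : (2 * k + n + 3 : ℂ) = 2 * (k + 1) + n + 1 := by ring
  rw [E'_mul_E'_add_one_eq, starWeight_eq, gScal_two, gScal_one, hScal_one, hScal_two, eN, eN1]
  push_cast
  generalize (2 * (k + 1) + n : ℂ) = N at hN hN1 hN2 ⊢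
  field_simp
  ring

lemma two_mul_gScal_add_gScal_mul_hScal (hn : n ≠ 0) (lam : ℂ) (k : ℕ) :
    2 * gScal n lam 2 k + gScal n lam 1 k * hScal n lam 1 k =
      (((k : ℂ) + n / 2) * (k + n / 2 + 1))⁻¹ * starWeight n lam k * (2 * k + n) / 16 := by
  have hN : (2 * k + n : ℂ) ≠ 0 := mod_cast (by omega : 2 * k + n ≠ 0)
  have hN1 : (2 * k + n + 1 : ℂ) ≠ 0 := mod_cast (2 * k + n).succ_ne_zero
  have hN2 : (2 * k + n + 2 : ℂ) ≠ 0 := mod_cast (2 * k + n + 1).succ_ne_zero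
  rw [E'_mul_E'_add_one_eq, starWeight_eq, gScal_two, gScal_one, hScal_one]
  field_simp
  ring

theorem C_two_X_inr_left_eq_cE_Lop (lam : ℂ) (m : Fin n) (ψ : PolA n) :
    C n lam 2 (X (Sum.inr m)) ψ =
      cE (fun k => (((k : ℂ) + n / 2) * (k + n / 2 + 1))⁻¹)
        (cE (starWeight n lam) (Lop n m ψ)) := by
  rw [C_two_X_inr_comm, C_two_X_inr_right_eq_cE, cE_cE, cE_Lop]
  simp only [gScal_add_gScal_mul_hScal_add_hScal,
    two_mul_gScal_add_gScal_mul_hScal m.pos.ne', neg_mul]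

/-! ### Membership in the Weyl algebra -/

lemma mulLeft_X_inr_mem_Weyl (i : Fin n) :
    (LinearMap.mulLeft ℂ (X (Sum.inr i)) : Module.End ℂ (PolA n)) ∈ Weyl n :=
  Algebra.subset_adjoin (Or.inl (Or.inr ⟨i, rfl⟩))

lemma pderiv_mem_Weyl (v : Fin n ⊕ Fin n) :
    ((pderiv v).toLinearMap : Module.End ℂ (PolA n)) ∈ Weyl n :=
  Algebra.subset_adjoin (Or.inr ⟨v, rfl⟩)

lemma Dlin_mem_Weyl (n : ℕ) : Dlin n ∈ Weyl n :=
  sum_mem fun _ _ => mul_mem (pderiv_mem_Weyl _) (pderiv_mem_Weyl _)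

lemma E'lin_mem_Weyl (n : ℕ) : E'lin n ∈ Weyl n :=
  add_mem (sum_mem fun _ _ => mul_mem (mulLeft_X_inr_mem_Weyl _) (pderiv_mem_Weyl _))
    ((Weyl n).smul_mem (one_mem _) _)

lemma Lop_mem_Weyl (m : Fin n) : Lop n m ∈ Weyl n :=
  (Weyl n).smul_mem (mul_mem
    (sub_mem (mul_mem (mulLeft_X_inr_mem_Weyl m) (Dlin_mem_Weyl n))
      ((Weyl n).smul_mem (mul_mem (E'lin_mem_Weyl n) (pderiv_mem_Weyl _)) _))
    (Dlin_mem_Weyl n)) _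

end LO

theorem stmt_15_general (n : ℕ) (lam : ℂ) (m : Fin n) :
    LO.Lop n m ∈ LO.Weyl n ∧
    ∀ ψ : PolA n,
      LO.C n lam 2 (X (Sum.inr m)) ψ = LO.C n lam 2 ψ (X (Sum.inr m)) ∧
      LO.cE (fun k => ((k : ℂ) + (n : ℂ) / 2) * ((k : ℂ) + (n : ℂ) / 2 + 1))
          (LO.C n lam 2 (X (Sum.inr m)) ψ) =
        LO.cE (LO.starWeight n lam) (LO.Lop n m ψ) ∧
      LO.C n lam 2 (X (Sum.inr m)) ψ =
        LO.cE (fun k => (((k : ℂ) + (n : ℂ) / 2) * ((k : ℂ) + (n : ℂ) / 2 + 1))⁻¹)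
          (LO.cE (LO.starWeight n lam) (LO.Lop n m ψ)) := by
  refine ⟨LO.Lop_mem_Weyl m, fun ψ => ⟨LO.C_two_X_inr_comm lam m ψ, ?_,
    LO.C_two_X_inr_left_eq_cE_Lop lam m ψ⟩⟩
  rw [LO.C_two_X_inr_left_eq_cE_Lop, LO.cE_cE]
  simp only [mul_inv_cancel₀ (LO.E'_mul_E'_add_one_ne_zero m.pos.ne' _), LO.cE_one]

/-- Corollary 6: `L^{(m)} = −(1/16)(ξ_m ∘ D − 2E' ∘ ∂/∂u_m) ∘ D`
lies in the Weyl algebra and for all `ψ ∈ A`,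
`C^{1/2}_2(ξ_m,ψ) = C^{1/2}_2(ψ,ξ_m) = (E'(E'+1))⁻¹(L^{(m)}ψ)`, i.e.
`E'(E'+1)(C^{1/2}_2(ξ_m,ψ)) = L^{(m)}ψ`. -/
theorem stmt_15 (n : ℕ) (hn : 1 ≤ n) (m : Fin n) :
    LO.Lop n m ∈ LO.Weyl n ∧
    ∀ ψ : PolA n,
      LO.C n (1 / 2) 2 (X (Sum.inr m)) ψ = LO.C n (1 / 2) 2 ψ (X (Sum.inr m)) ∧
      LO.cE (fun k => ((k : ℂ) + (n : ℂ) / 2) * ((k : ℂ) + (n : ℂ) / 2 + 1))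
          (LO.C n (1 / 2) 2 (X (Sum.inr m)) ψ) = LO.Lop n m ψ ∧
      LO.C n (1 / 2) 2 (X (Sum.inr m)) ψ =
        LO.cE (fun k => (((k : ℂ) + (n : ℂ) / 2) * ((k : ℂ) + (n : ℂ) / 2 + 1))⁻¹)
          (LO.Lop n m ψ) := by
  simpa only [LO.starWeight_half, LO.cE_one] using stmt_15_general n (1 / 2) m
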